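/- Let r be a positive integer, let ψ be the distribution degenerate at r, and let 𝒢=(V,E,λ) be a sample from Γ_{[n]}(ψ) (so that almost surely all labels are distinct), with 𝒢^O its order discretization. Then for any constants α,β>0, the probability that there exists a nonempty proper subset S⊂V such that the number of labels of 𝒢^O with (discretized) time at most α·n·log n lying on edges between S and V∖S exceeds β·r·|S|·(n−|S|) is o(n^{−1}) as n→∞. -/

import Mathlib

open MeasureTheory ProbabilityTheory Filter Set
open scoped ENNReal NNReal Topology

noncomputable section

namespace RTG

/-- A temporal graph on vertex type `V`, given by the finite set of real time labels
attached to each potential edge (unordered pair of vertices). -/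
abbrev TGraph (V : Type*) := Sym2 V → Finset ℝ

/-- `P` is a strict partial order supported on the set `s`. -/
def StrictPartialOrderOn {α : Type*} (s : Set α) (P : α → α → Prop) : Prop :=
  (∀ a, ¬ P a a) ∧ (∀ a b c, P a b → P b c → P a c) ∧ ∀ a b, P a b → a ∈ s ∧ b ∈ s

/-- The temporal graph `Λ` contains `(H, P)` as a `δ`-temporal motif. -/
def Contains {VH V : Type*} (H : SimpleGraph VH) (P : Sym2 VH → Sym2 VH → Prop)
    (Λ : TGraph V) (δ : ℝ) : Prop :=
  ∃ Φ : VH → V, Function.Injective Φ ∧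
    ∃ lab : Sym2 VH → ℝ,
      (∀ e ∈ H.edgeSet, lab e ∈ Λ (Sym2.map Φ e)) ∧
      (∀ e f, P e f → lab e < lab f) ∧
      (∀ e ∈ H.edgeSet, ∀ f ∈ H.edgeSet, lab e - lab f < δ)

/-- The sparsity `ρ_H` of a graph `H`: the minimum over subgraphs with at least two
edges of `|V_I| / (|E_I| - 1)`. -/
def sparsity {VH : Type*} (H : SimpleGraph VH) : ℝ :=
  sInf {x : ℝ | ∃ I : H.Subgraph, 2 ≤ I.edgeSet.ncard ∧
    x = (I.verts.ncard : ℝ) / ((I.edgeSet.ncard : ℝ) - 1)}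

/-- The space of label data on a single edge: a number `k` of labels together with the
tuple of `k` label values (indexed in order of sampling). -/
abbrev LabelSpace := Σ k : ℕ, Fin k → ℝ

/-- The uniform distribution on `(0, 1]`. -/
def unif01 : Measure ℝ := volume.restrict (Set.Ioc 0 1)

/-- The uniform distribution on `{1, …, T}` (as a measure on `ℝ`). -/
def unifDisc (T : ℕ) : Measure ℝ :=
  (T : ℝ≥0∞)⁻¹ • ∑ k ∈ Finset.Icc 1 T, Measure.dirac (k : ℝ)

/-- The distribution of the label data of a single edge: the number of labels is drawn
according to `ψ` and, independently, each label value is drawn according to `ν`. -/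
def edgeMeasure (ν : Measure ℝ) (ψ : Measure ℕ) : Measure LabelSpace :=
  Measure.sum fun k => ψ {k} • (Measure.pi fun _ : Fin k => ν).map (Sigma.mk k)

/-- The doubly random temporal graph model on vertex set `V` with label value
distribution `ν` and label multiplicity distribution `ψ`: all edges receive independent
identically distributed label data. -/
def model (V : Type*) [Fintype V] [DecidableEq V] (ν : Measure ℝ) (ψ : Measure ℕ) :
    Measure (Sym2 V → LabelSpace) :=
  Measure.pi fun _ : Sym2 V => edgeMeasure ν ψ

/-- The continuous doubly random temporal graph `Γ_V(ψ)`. -/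
abbrev contModel (V : Type*) [Fintype V] [DecidableEq V] (ψ : Measure ℕ) :
    Measure (Sym2 V → LabelSpace) := model V unif01 ψ

/-- The discrete doubly random temporal graph `Γ_V(ψ, T)`. -/
abbrev discModel (V : Type*) [Fintype V] [DecidableEq V] (ψ : Measure ℕ) (T : ℕ) :
    Measure (Sym2 V → LabelSpace) := model V (unifDisc T) ψ

/-- The temporal graph determined by a sample `ω` of the model: each non-loop edge
carries the sampled set of labels. -/
def toTGraph {V : Type*} [DecidableEq V] (ω : Sym2 V → LabelSpace) : TGraph V :=
  fun e => if e.IsDiag then ∅ else Finset.image (ω e).2 Finset.univ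

/-- The `T`-discretization of a temporal graph: each label `l` is replaced by `⌈T·l⌉`. -/
def discretize {V : Type*} (T : ℕ) (Λ : TGraph V) : TGraph V :=
  fun e => (Λ e).image fun l => ((⌈(T : ℝ) * l⌉ : ℤ) : ℝ)

/-- `ψ` is a label multiplicity distribution: a probability distribution on `ℕ` with
positive finite mean and finite second moment. -/
def IsLMD (ψ : Measure ℕ) : Prop :=
  IsProbabilityMeasure ψ ∧ Integrable (fun k : ℕ => (k : ℝ)) ψ ∧
    Integrable (fun k : ℕ => (k : ℝ) ^ 2) ψ ∧ 0 < ∫ k, (k : ℝ) ∂ψ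

/-- The mean `r` of a label multiplicity distribution. -/
def lmdMean (ψ : Measure ℕ) : ℝ := ∫ k, (k : ℝ) ∂ψ

/-- The second moment `r₂` of a label multiplicity distribution. -/
def lmdSq (ψ : Measure ℕ) : ℝ := ∫ k, (k : ℝ) ^ 2 ∂ψ

/-- `q = P[Q > 0]` for a label multiplicity distribution. -/
def lmdPos (ψ : Measure ℕ) : ℝ := (ψ {k | 0 < k}).toReal

/-- `v` is reachable from the set `S` by time `t` in the temporal graph `Λ`. -/
def ReachBy {V : Type*} (Λ : TGraph V) (S : Set V) (t : ℝ) (v : V) : Prop :=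
  v ∈ S ∨ ∃ (k : ℕ) (f : ℕ → V) (ts : ℕ → ℝ), 0 < k ∧ f 0 ∈ S ∧ f k = v ∧
    (∀ i < k, ts i ∈ Λ s(f i, f (i + 1))) ∧
    (∀ i j, i < j → j < k → ts i < ts j) ∧ ts (k - 1) ≤ t

/-- The reachability ball `B_Λ(S, t)`. -/
def ball {V : Type*} (Λ : TGraph V) (S : Set V) (t : ℝ) : Set V := {v | ReachBy Λ S t v}

/-- The doubling time of the set `S` in `Λ` (with value `∞` if the reachability ball
never doubles in size). -/
def doubleTime {V : Type*} (Λ : TGraph V) (S : Set V) : ℝ≥0∞ :=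
  ⨅ (t : ℝ) (_ : 0 ≤ t ∧ 2 * S.ncard ≤ (ball Λ S t).ncard), ENNReal.ofReal t

/-- The doubling time of the temporal graph `Λ`: the maximum doubling time over all
nonempty vertex sets of size at most half the number of vertices. -/
def doubleAll {V : Type*} [Fintype V] (Λ : TGraph V) : ℝ≥0∞ :=
  ⨆ (S : Set V) (_ : S.Nonempty ∧ 2 * S.ncard ≤ Fintype.card V), doubleTime Λ S

/-- `Double⁻`: the maximum doubling time over nonempty sets of size at most `n/4`. -/
def doubleSmall {V : Type*} [Fintype V] (Λ : TGraph V) : ℝ≥0∞ :=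
  ⨆ (S : Set V) (_ : S.Nonempty ∧ 4 * S.ncard ≤ Fintype.card V), doubleTime Λ S

/-- `Double⁺`: the maximum doubling time over sets of size in `(n/4, n/2]`. -/
def doubleLarge {V : Type*} [Fintype V] (Λ : TGraph V) : ℝ≥0∞ :=
  ⨆ (S : Set V) (_ : Fintype.card V < 4 * S.ncard ∧ 2 * S.ncard ≤ Fintype.card V),
    doubleTime Λ S

/-- The partial reversal `ℛ(Λ, t)`: every label `l < t` is replaced by `t - l`. -/
def reverse {V : Type*} (Λ : TGraph V) (t : ℝ) : TGraph V :=
  fun e => (Λ e).image fun l => if l < t then t - l else l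

/-- The rank of a time `x` among all the labels of the sample `ω`: the number of labels
(on genuine, non-loop, edges) that are at most `x`. -/
def rank {V : Type*} [Fintype V] [DecidableEq V] (ω : Sym2 V → LabelSpace) (x : ℝ) : ℕ :=
  ∑ e ∈ Finset.univ.filter (fun e : Sym2 V => ¬ e.IsDiag),
    Nat.card {i : Fin (ω e).1 // (ω e).2 i ≤ x}

/-- The order discretization `𝒢^O` of the sample `ω`: each label is replaced by its rank
among all labels. -/
def orderDisc {V : Type*} [Fintype V] [DecidableEq V] (ω : Sym2 V → LabelSpace) :
    TGraph V :=
  fun e => if e.IsDiag then ∅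
    else Finset.image (fun i => (rank ω ((ω e).2 i) : ℝ)) Finset.univ


/-- The number of labels of the order discretization of `ω` with (discretized) time at
most `t` lying on an edge between `S` and its complement. -/
def cutCount {n : ℕ} (ω : Sym2 (Fin n) → LabelSpace) (S : Set (Fin n)) (t : ℝ) : ℕ :=
  ∑ᶠ e ∈ {e : Sym2 (Fin n) | ∃ u v, u ∈ S ∧ v ∉ S ∧ e = s(u, v)},
    Nat.card {i : Fin (ω e).1 // (rank ω ((ω e).2 i) : ℝ) ≤ t}

/-! Let `x` be a quantile of the label distribution at level `exp (-4 / β)`. The number of labels that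
are at most `x` is binomial with mean of order `n²`, so by a Chernoff bound it exceeds the time
horizon `t = o(n²)` outside an event of probability `exp (-Ω(n²))`. Every label of rank at most `t`
is then smaller than `x`, and splitting the labels into `< x` and `≤ x` makes this work for label
distributions with atoms, too. On the cut of `S` there are `M = r * |S| * (n - |S|)` labels, each
smaller than `x` with probability at most `exp (-4 / β)`; the Chernoff bound at parameter `4 / β`
shows that more than `β * M` of them are smaller than `x` with probability at most
`exp (M - 4 * M) ≤ exp (-3 * (n - 1))`, which beats the union bound over `2 ^ n` cuts. -/

section LabelCount

variable {V : Type*}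

lemma measurable_sigmaMk {ι : Type*} {X : ι → Type*} [∀ i, MeasurableSpace (X i)] (i : ι) :
    Measurable (Sigma.mk i : X i → Σ i, X i) :=
  fun _ hs => MeasurableSpace.measurableSet_iInf.1 hs i

lemma measurable_of_comp_sigmaMk {ι Y : Type*} {X : ι → Type*} [∀ i, MeasurableSpace (X i)]
    [MeasurableSpace Y] {f : (Σ i, X i) → Y} (hf : ∀ i, Measurable (f ∘ Sigma.mk i)) :
    Measurable f :=
  fun _ hs => MeasurableSpace.measurableSet_iInf.2 fun i => hf i hs

lemma edgeMeasure_dirac (ν : Measure ℝ) (r : ℕ) :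
    edgeMeasure ν (Measure.dirac r) = (Measure.pi fun _ : Fin r => ν).map (Sigma.mk r) := by
  ext s hs
  rw [edgeMeasure, Measure.sum_apply _ hs, tsum_eq_single r fun k hk => by simp [hk.symm]]
  simp

instance isProbabilityMeasure_edgeMeasure_dirac (ν : Measure ℝ) [IsProbabilityMeasure ν] (r : ℕ) :
    IsProbabilityMeasure (edgeMeasure ν (Measure.dirac r)) := by
  rw [edgeMeasure_dirac]
  exact Measure.isProbabilityMeasure_map (measurable_sigmaMk r).aemeasurable

instance isProbabilityMeasure_model_dirac [Fintype V] [DecidableEq V] (ν : Measure ℝ)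
    [IsProbabilityMeasure ν] (r : ℕ) : IsProbabilityMeasure (model V ν (Measure.dirac r)) := by
  unfold model
  infer_instance

/-- The number of labels of an edge, with multiplicity, that lie in `B`. -/
def edgeLabelCount (B : Set ℝ) (y : LabelSpace) : ℕ :=
  Nat.card {i : Fin y.1 // y.2 i ∈ B}

/-- The number of labels on the edges of `A`, with multiplicity, that lie in `B`. -/
def labelCount (A : Finset (Sym2 V)) (B : Set ℝ) (ω : Sym2 V → LabelSpace) : ℕ :=
  ∑ e ∈ A, edgeLabelCount B (ω e)

lemma cast_edgeLabelCount_mk (B : Set ℝ) {k : ℕ} (x : Fin k → ℝ) :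
    (edgeLabelCount B ⟨k, x⟩ : ℝ) = ∑ i, B.indicator 1 (x i) := by
  classical
  simp [edgeLabelCount, Fintype.card_subtype, indicator_apply]

lemma measurable_cast_edgeLabelCount {B : Set ℝ} (hB : MeasurableSet B) :
    Measurable fun y => (edgeLabelCount B y : ℝ) := by
  refine measurable_of_comp_sigmaMk fun k => ?_
  simp only [Function.comp_def, cast_edgeLabelCount_mk]
  exact Finset.measurable_fun_sum _ fun i _ =>
    (measurable_one.indicator hB).comp (measurable_pi_apply i)

lemma edgeLabelCount_mono {B C : Set ℝ} (y : LabelSpace) (h : B ⊆ C) :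
    edgeLabelCount B y ≤ edgeLabelCount C y :=
  Nat.card_le_card_of_injective (Subtype.map id fun _ hi => h hi)
    (Subtype.map_injective _ Function.injective_id)

lemma labelCount_mono (A : Finset (Sym2 V)) {B C : Set ℝ} (ω : Sym2 V → LabelSpace) (h : B ⊆ C) :
    labelCount A B ω ≤ labelCount A C ω :=
  Finset.sum_le_sum fun e _ => edgeLabelCount_mono (ω e) h

end LabelCount

section Chernoff

variable {Ω : Type*} [MeasurableSpace Ω] {V : Type*} [Fintype V] [DecidableEq V]

lemma mgf_indicator_one (μ : Measure Ω) [IsProbabilityMeasure μ] {B : Set Ω}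
    (hB : MeasurableSet B) (s : ℝ) :
    mgf (B.indicator 1) μ s = 1 + (Real.exp s - 1) * μ.real B := by
  have hexp : ∀ x, Real.exp (s * B.indicator 1 x)
      = 1 + (Real.exp s - 1) * B.indicator (1 : Ω → ℝ) x := by
    intro x
    by_cases hx : x ∈ B <;> simp [hx]
  have hint : Integrable (B.indicator (1 : Ω → ℝ)) μ :=
    (integrable_const (1 : ℝ)).indicator hB
  simp_rw [mgf, hexp]
  rw [integral_add (integrable_const _) (hint.const_mul _), integral_const_mul,
    integral_indicator_one hB]
  simp

lemma mgf_sum_eval_pi {ι : Type*} [Fintype ι] (μ : Measure Ω) [IsProbabilityMeasure μ]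
    {f : Ω → ℝ} (hf : Measurable f) (A : Finset ι) (s : ℝ) :
    mgf (fun ω : ι → Ω => ∑ i ∈ A, f (ω i)) (Measure.pi fun _ => μ) s = mgf f μ s ^ A.card := by
  have hindep : iIndepFun (fun i (ω : ι → Ω) => f (ω i)) (Measure.pi fun _ => μ) :=
    iIndepFun_pi fun _ => hf.aemeasurable
  have heval : ∀ i, mgf (fun ω : ι → Ω => f (ω i)) (Measure.pi fun _ => μ) s = mgf f μ s := by
    intro i
    have hmap := mgf_map (μ := Measure.pi fun _ : ι => μ) (X := f) (t := s)
      (measurable_pi_apply i).aemeasurable (by fun_prop)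
    rwa [(measurePreserving_eval (fun _ : ι => μ) i).map_eq, eq_comm] at hmap
  have hsum := hindep.mgf_sum (t := s) (fun i => hf.comp (measurable_pi_apply i)) A
  simp_rw [heval, Finset.prod_const] at hsum
  rw [← hsum]
  congr 1 with ω
  simp

variable {ν : Measure ℝ} [IsProbabilityMeasure ν] {B : Set ℝ}

lemma mgf_edgeLabelCount (hB : MeasurableSet B) (r : ℕ) (s : ℝ) :
    mgf (fun y => (edgeLabelCount B y : ℝ)) (edgeMeasure ν (Measure.dirac r)) s
      = (1 + (Real.exp s - 1) * ν.real B) ^ r := by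
  have hexp : Measurable fun y => Real.exp (s * edgeLabelCount B y) :=
    ((measurable_cast_edgeLabelCount hB).const_mul s).exp
  rw [edgeMeasure_dirac, mgf_map (measurable_sigmaMk r).aemeasurable hexp.aestronglyMeasurable]
  simp only [Function.comp_def, cast_edgeLabelCount_mk]
  rw [mgf_sum_eval_pi ν (measurable_one.indicator hB), mgf_indicator_one ν hB, Finset.card_univ,
    Fintype.card_fin]

lemma mgf_labelCount (hB : MeasurableSet B) (A : Finset (Sym2 V)) (r : ℕ) (s : ℝ) :
    mgf (fun ω => (labelCount A B ω : ℝ)) (model V ν (Measure.dirac r)) s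
      = (1 + (Real.exp s - 1) * ν.real B) ^ (r * A.card) := by
  simp only [labelCount, Nat.cast_sum]
  rw [model, mgf_sum_eval_pi _ (measurable_cast_edgeLabelCount hB), mgf_edgeLabelCount hB, pow_mul]

lemma one_add_exp_sub_one_mul_pos {q : ℝ} (hq₀ : 0 ≤ q) (hq₁ : q ≤ 1) (s : ℝ) :
    0 < 1 + (Real.exp s - 1) * q := by
  rcases hq₀.eq_or_lt with rfl | hq
  · simp
  · nlinarith [mul_pos (Real.exp_pos s) hq]

lemma mgf_labelCount_le (hB : MeasurableSet B) (A : Finset (Sym2 V)) (r : ℕ) (s : ℝ) :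
    mgf (fun ω => (labelCount A B ω : ℝ)) (model V ν (Measure.dirac r)) s
      ≤ Real.exp ((Real.exp s - 1) * ν.real B * (r * A.card)) := by
  have hpos := one_add_exp_sub_one_mul_pos measureReal_nonneg
    (measureReal_le_one (μ := ν) (s := B)) s
  calc mgf (fun ω => (labelCount A B ω : ℝ)) (model V ν (Measure.dirac r)) s
      = (1 + (Real.exp s - 1) * ν.real B) ^ (r * A.card) := mgf_labelCount hB A r s
    _ ≤ Real.exp ((Real.exp s - 1) * ν.real B) ^ (r * A.card) := by
      gcongr
      linarith [Real.add_one_le_exp ((Real.exp s - 1) * ν.real B)]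
    _ = Real.exp ((Real.exp s - 1) * ν.real B * (r * A.card)) := by
      rw [← Real.exp_nat_mul, mul_comm, Nat.cast_mul]

lemma integrable_exp_mul_labelCount (hB : MeasurableSet B) (A : Finset (Sym2 V)) (r : ℕ) (s : ℝ) :
    Integrable (fun ω => Real.exp (s * labelCount A B ω)) (model V ν (Measure.dirac r)) := by
  rw [← mgf_pos_iff, mgf_labelCount hB]
  exact pow_pos (one_add_exp_sub_one_mul_pos measureReal_nonneg measureReal_le_one s) _

lemma measureReal_le_labelCount_le_exp (hB : MeasurableSet B) (A : Finset (Sym2 V)) (r : ℕ)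
    {s : ℝ} (hs : 0 ≤ s) (a : ℝ) :
    (model V ν (Measure.dirac r)).real {ω | a ≤ labelCount A B ω}
      ≤ Real.exp ((Real.exp s - 1) * ν.real B * (r * A.card) - s * a) := by
  refine (measure_ge_le_exp_mul_mgf a hs (integrable_exp_mul_labelCount hB A r s)).trans ?_
  rw [sub_eq_neg_add, Real.exp_add, ← neg_mul]
  gcongr
  exact mgf_labelCount_le hB A r s

lemma measureReal_labelCount_le_le_exp (hB : MeasurableSet B) (A : Finset (Sym2 V)) (r : ℕ)
    {s : ℝ} (hs : s ≤ 0) (a : ℝ) :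
    (model V ν (Measure.dirac r)).real {ω | labelCount A B ω ≤ a}
      ≤ Real.exp ((Real.exp s - 1) * ν.real B * (r * A.card) - s * a) := by
  refine (measure_le_le_exp_mul_mgf a hs (integrable_exp_mul_labelCount hB A r s)).trans ?_
  rw [sub_eq_neg_add, Real.exp_add, ← neg_mul]
  gcongr
  exact mgf_labelCount_le hB A r s

end Chernoff

section Quantile

lemma exists_measureReal_Iio_le_and_le_measureReal_Iic (ν : Measure ℝ) [IsProbabilityMeasure ν]
    {q : ℝ} (hq₀ : 0 < q) (hq₁ : q < 1) : ∃ x, ν.real (Iio x) ≤ q ∧ q ≤ ν.real (Iic x) := by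
  set A : Set ℝ := {y | q ≤ cdf ν y}
  have hA : A.Nonempty := ((tendsto_cdf_atTop ν).eventually_const_le hq₁).exists
  obtain ⟨b, hb⟩ := ((tendsto_cdf_atBot ν).eventually_lt_const hq₀).exists
  have hA' : BddBelow A := ⟨b, fun y hy => ((monotone_cdf ν).reflect_lt (hb.trans_le hy)).le⟩
  have hlt : ∀ y < sInf A, cdf ν y ≤ q := fun y hy =>
    (not_le.1 fun h => (csInf_le hA' h).not_gt hy).le
  have hgt : ∀ y > sInf A, q ≤ cdf ν y := fun y hy =>
    let ⟨a, ha, hay⟩ := exists_lt_of_csInf_lt hA hy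
    ha.trans (monotone_cdf ν hay.le)
  refine ⟨sInf A, ?_, ?_⟩
  · have hIio : ν (Iio (sInf A)) = ENNReal.ofReal (Function.leftLim (cdf ν) (sInf A)) := by
      simpa [measure_cdf] using (cdf ν).measure_Iio (tendsto_cdf_atBot ν) (sInf A)
    rw [measureReal_def, hIio]
    refine ENNReal.toReal_le_of_le_ofReal hq₀.le (ENNReal.ofReal_le_ofReal ?_)
    exact le_of_tendsto ((monotone_cdf ν).tendsto_leftLim _) (eventually_mem_nhdsWithin.mono hlt)
  · rw [← cdf_eq_real]
    exact ge_of_tendsto (((cdf ν).right_continuous _).mono Ioi_subset_Ici_self)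
      (eventually_mem_nhdsWithin.mono hgt)

end Quantile

section Cut

variable {V : Type*}

/-- The edges of the complete graph between `S` and its complement. -/
def cutEdges [Finite V] (S : Set V) : Finset (Sym2 V) :=
  (Set.toFinite {e : Sym2 V | ∃ u v, u ∈ S ∧ v ∉ S ∧ e = s(u, v)}).toFinset

lemma card_cutEdges_le [Finite V] (S : Set V) : (cutEdges S).card ≤ S.ncard * Sᶜ.ncard := by
  have himage : {e : Sym2 V | ∃ u v, u ∈ S ∧ v ∉ S ∧ e = s(u, v)}
      ⊆ (fun a : V × V => s(a.1, a.2)) '' (S ×ˢ Sᶜ) := by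
    rintro _ ⟨u, v, hu, hv, rfl⟩
    exact ⟨(u, v), ⟨hu, hv⟩, rfl⟩
  rw [cutEdges, ← Set.ncard_eq_toFinset_card _, ← Set.ncard_prod]
  exact (Set.ncard_le_ncard himage).trans Set.ncard_image_le

lemma card_le_ncard_mul_ncard_compl_add_one [Finite V] {S : Set V} (hS : S.Nonempty)
    (hS' : S ≠ univ) : Nat.card V ≤ S.ncard * Sᶜ.ncard + 1 := by
  have hpos : 0 < S.ncard := hS.ncard_pos
  have hpos' : 0 < Sᶜ.ncard := (Set.nonempty_compl.2 hS').ncard_pos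
  rw [← Set.ncard_add_ncard_compl S]
  nlinarith

lemma rank_eq_labelCount [Fintype V] [DecidableEq V] (ω : Sym2 V → LabelSpace) (x : ℝ) :
    rank ω x = labelCount {e | ¬ e.IsDiag} (Iic x) ω :=
  rfl

lemma rank_mono [Fintype V] [DecidableEq V] (ω : Sym2 V → LabelSpace) : Monotone (rank ω) :=
  fun _ _ h => labelCount_mono _ ω (Iic_subset_Iic.2 h)

lemma cutCount_eq_labelCount {n : ℕ} (ω : Sym2 (Fin n) → LabelSpace) (S : Set (Fin n)) (t : ℝ) :
    cutCount ω S t = labelCount (cutEdges S) {l | rank ω l ≤ t} ω :=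
  finsum_mem_eq_finite_toFinset_sum _ _

lemma cutCount_le_labelCount_Iio {n : ℕ} {ω : Sym2 (Fin n) → LabelSpace} {t x : ℝ}
    (h : t < rank ω x) (S : Set (Fin n)) :
    cutCount ω S t ≤ labelCount (cutEdges S) (Iio x) ω := by
  rw [cutCount_eq_labelCount]
  refine labelCount_mono _ ω fun l (hl : (rank ω l : ℝ) ≤ t) => (rank_mono ω).reflect_lt ?_
  exact_mod_cast hl.trans_lt h

variable [Fintype V] [DecidableEq V] {ν : Measure ℝ} [IsProbabilityMeasure ν]

lemma measureReal_rank_le_le_exp (r : ℕ) (x t : ℝ) :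
    (model V ν (Measure.dirac r)).real {ω | rank ω x ≤ t}
      ≤ Real.exp (t - (1 - Real.exp (-1)) * ν.real (Iic x) * (r * (Fintype.card V).choose 2)) := by
  have hcard : (Finset.univ.filter fun e : Sym2 V => ¬ e.IsDiag).card
      = (Fintype.card V).choose 2 := by
    rw [← Fintype.card_subtype, Sym2.card_subtype_not_diag]
  simp_rw [rank_eq_labelCount]
  refine (measureReal_labelCount_le_le_exp measurableSet_Iic _ r (by simp : (-1 : ℝ) ≤ 0) t).trans
    (le_of_eq ?_)
  rw [hcard]
  ring_nf

lemma measureReal_mul_le_labelCount_cutEdges_le_exp (r : ℕ) {β : ℝ} (hβ : 0 < β) {B : Set ℝ}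
    (hB : MeasurableSet B) (hνB : ν.real B ≤ Real.exp (-(4 / β))) (S : Set V) :
    (model V ν (Measure.dirac r)).real
        {ω | β * (r * (S.ncard * Sᶜ.ncard)) ≤ labelCount (cutEdges S) B ω}
      ≤ Real.exp (-(3 * (r * (S.ncard * Sᶜ.ncard)))) := by
  have hrate : (Real.exp (4 / β) - 1) * ν.real B ≤ 1 := calc
    (Real.exp (4 / β) - 1) * ν.real B ≤ Real.exp (4 / β) * Real.exp (-(4 / β)) := by
      gcongr; linarith
    _ = 1 := by rw [← Real.exp_add, add_neg_cancel, Real.exp_zero]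
  have hcard : ((cutEdges S).card : ℝ) ≤ S.ncard * Sᶜ.ncard := mod_cast card_cutEdges_le S
  refine (measureReal_le_labelCount_le_exp hB _ r (by positivity : 0 ≤ 4 / β) _).trans ?_
  gcongr
  calc (Real.exp (4 / β) - 1) * ν.real B * (r * (cutEdges S).card)
        - 4 / β * (β * (r * (S.ncard * Sᶜ.ncard)))
      ≤ 1 * (r * (S.ncard * Sᶜ.ncard)) - 4 / β * (β * (r * (S.ncard * Sᶜ.ncard))) := by gcongr
    _ = -(3 * (r * (S.ncard * Sᶜ.ncard))) := by field_simp; ring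

end Cut

section OverloadedCut

/-- The event that some cut of the order discretization carries more than `β r |S| (n - |S|)`
labels of discretized time at most `t`. -/
def overloadedCutEvent (n r : ℕ) (β t : ℝ) : Set (Sym2 (Fin n) → LabelSpace) :=
  {ω | ∃ S : Set (Fin n), S.Nonempty ∧ S ≠ Set.univ ∧
    β * r * S.ncard * ((n : ℝ) - S.ncard) < (cutCount ω S t : ℝ)}

lemma overloadedCutEvent_subset (n r : ℕ) (β t x : ℝ) :
    overloadedCutEvent n r β t ⊆ {ω | rank ω x ≤ t} ∪
      ⋃ S ∈ (Set.toFinite {S : Set (Fin n) | S.Nonempty ∧ S ≠ univ}).toFinset,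
        {ω | β * (r * (S.ncard * Sᶜ.ncard)) ≤ labelCount (cutEdges S) (Iio x) ω} := by
  rintro ω ⟨S, hS, hS', hcut⟩
  by_cases hx : (rank ω x : ℝ) ≤ t
  · exact Or.inl hx
  refine Or.inr (mem_iUnion₂.2 ⟨S, by simp [hS, hS'], ?_⟩)
  have hcompl : (n : ℝ) - S.ncard = Sᶜ.ncard := by
    rw [sub_eq_iff_eq_add']
    exact_mod_cast (Nat.card_fin n ▸ Set.ncard_add_ncard_compl S).symm
  calc β * (r * (S.ncard * Sᶜ.ncard))
      = β * r * S.ncard * (n - S.ncard) := by rw [hcompl]; ring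
    _ ≤ cutCount ω S t := hcut.le
    _ ≤ labelCount (cutEdges S) (Iio x) ω :=
      mod_cast cutCount_le_labelCount_Iio (not_le.1 hx) S

lemma measureReal_overloadedCutEvent_le {ν : Measure ℝ} [IsProbabilityMeasure ν] {r : ℕ}
    (hr : 0 < r) {β : ℝ} (hβ : 0 < β) {x : ℝ} (hx : ν.real (Iio x) ≤ Real.exp (-(4 / β)))
    (n : ℕ) (t : ℝ) :
    (model (Fin n) ν (Measure.dirac r)).real (overloadedCutEvent n r β t)
      ≤ Real.exp (t - (1 - Real.exp (-1)) * ν.real (Iic x) * n.choose 2)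
        + 2 ^ n * Real.exp (-(3 * ((n : ℝ) - 1))) := by
  have hr' : (1 : ℝ) ≤ r := mod_cast hr
  have hrate : 0 ≤ (1 - Real.exp (-1)) * ν.real (Iic x) := mul_nonneg (by simp) measureReal_nonneg
  have hrank : (model (Fin n) ν (Measure.dirac r)).real {ω | rank ω x ≤ t}
      ≤ Real.exp (t - (1 - Real.exp (-1)) * ν.real (Iic x) * n.choose 2) := by
    refine (measureReal_rank_le_le_exp r x t).trans ?_
    rw [Fintype.card_fin]
    gcongr
    exact le_mul_of_one_le_left (by positivity) hr'
  have hcut : ∀ S ∈ (Set.toFinite {S : Set (Fin n) | S.Nonempty ∧ S ≠ univ}).toFinset,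
      (model (Fin n) ν (Measure.dirac r)).real
        {ω | β * (r * (S.ncard * Sᶜ.ncard)) ≤ labelCount (cutEdges S) (Iio x) ω}
      ≤ Real.exp (-(3 * ((n : ℝ) - 1))) := by
    intro S hS
    obtain ⟨hS, hS'⟩ : S.Nonempty ∧ S ≠ univ := by simpa using hS
    refine (measureReal_mul_le_labelCount_cutEdges_le_exp r hβ measurableSet_Iio hx S).trans ?_
    gcongr
    have hn : (n : ℝ) ≤ S.ncard * Sᶜ.ncard + 1 := by
      exact_mod_cast Nat.card_fin n ▸ card_le_ncard_mul_ncard_compl_add_one hS hS'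
    exact (sub_le_iff_le_add.2 hn).trans (le_mul_of_one_le_left (by positivity) hr')
  refine (measureReal_mono (overloadedCutEvent_subset n r β t x)).trans
    ((measureReal_union_le _ _).trans (add_le_add hrank ?_))
  refine (measureReal_biUnion_finset_le _ _).trans ((Finset.sum_le_card_nsmul _ _ _ hcut).trans ?_)
  rw [nsmul_eq_mul]
  gcongr
  exact_mod_cast (Finset.card_le_univ _).trans_eq (by simp)

end OverloadedCut

section Asymptotics

open scoped Asymptotics

lemma tendsto_exp_sub_mul_choose_two_mul {t : ℕ → ℝ} (ht : t =o[atTop] fun n => (n : ℝ) ^ 2)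
    {c : ℝ} (hc : 0 < c) :
    Tendsto (fun n : ℕ => Real.exp (t n - c * n.choose 2) * n) atTop (𝓝 0) := by
  have hquad : Tendsto (fun n : ℕ => (n : ℝ) * ((1 + c / 2) - c / 4 * n)) atTop atBot :=
    tendsto_natCast_atTop_atTop.atTop_mul_atBot₀ <| tendsto_atBot_add_const_left _ _ <|
      tendsto_neg_atTop_atBot.comp (tendsto_natCast_atTop_atTop.const_mul_atTop (by positivity))
  refine squeeze_zero' (Eventually.of_forall fun n => by positivity) ?_
    (Real.tendsto_exp_atBot.comp hquad)
  filter_upwards [ht.def (by positivity : 0 < c / 4)] with n hn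
  have ht_le : t n ≤ c / 4 * n ^ 2 := by simpa using (le_abs_self _).trans hn
  have hn_le : (n : ℝ) ≤ Real.exp n := by linarith [Real.add_one_le_exp (n : ℝ)]
  calc Real.exp (t n - c * n.choose 2) * n
      ≤ Real.exp (c / 4 * n ^ 2 - c * n.choose 2) * Real.exp n := by gcongr
    _ = Real.exp (n * ((1 + c / 2) - c / 4 * n)) := by
      rw [← Real.exp_add, Nat.cast_choose_two]
      ring_nf

lemma tendsto_two_pow_mul_exp_mul :
    Tendsto (fun n : ℕ => 2 ^ n * Real.exp (-(3 * ((n : ℝ) - 1))) * n) atTop (𝓝 0) := by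
  have hratio : 2 * Real.exp (-3) < 1 := by
    rw [Real.exp_neg, ← div_eq_mul_inv, div_lt_one (Real.exp_pos 3)]
    linarith [Real.add_one_le_exp (3 : ℝ)]
  have hlim := (tendsto_self_mul_const_pow_of_lt_one (by positivity) hratio).const_mul (Real.exp 3)
  rw [mul_zero] at hlim
  refine hlim.congr fun n => ?_
  rw [mul_pow, ← Real.exp_nat_mul, show -(3 * ((n : ℝ) - 1)) = 3 + n * -3 by ring, Real.exp_add]
  ring

lemma isLittleO_mul_mul_log (α : ℝ) :
    (fun n : ℕ => α * n * Real.log n) =o[atTop] fun n => (n : ℝ) ^ 2 := by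
  have hlog : (fun n : ℕ => Real.log n) =o[atTop] fun n => (n : ℝ) :=
    Real.isLittleO_log_id_atTop.comp_tendsto tendsto_natCast_atTop_atTop
  simp_rw [mul_assoc, sq]
  exact ((Asymptotics.isBigO_refl _ _).mul_isLittleO hlog).const_mul_left α

theorem statement17_general (ν : Measure ℝ) [IsProbabilityMeasure ν] (r : ℕ) (hr : 0 < r) (β : ℝ)
    (hβ : 0 < β) (t : ℕ → ℝ) (ht : t =o[atTop] fun n => (n : ℝ) ^ 2) :
    Tendsto (fun n : ℕ =>
        model (Fin n) ν (Measure.dirac r) {ω | ∃ S : Set (Fin n),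
            S.Nonempty ∧ S ≠ Set.univ ∧
              β * r * S.ncard * ((n : ℝ) - S.ncard) < (cutCount ω S (t n) : ℝ)}
          * (n : ℝ≥0∞))
      atTop (𝓝 0) := by
  obtain ⟨x, hx, hx'⟩ := exists_measureReal_Iio_le_and_le_measureReal_Iic ν
    (q := Real.exp (-(4 / β))) (Real.exp_pos _) (by simpa using hβ)
  have hc : 0 < (1 - Real.exp (-1)) * ν.real (Iic x) :=
    mul_pos (by simp) ((Real.exp_pos _).trans_le hx')
  have hlim := (tendsto_exp_sub_mul_choose_two_mul ht hc).add tendsto_two_pow_mul_exp_mul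
  simp_rw [← add_mul, add_zero] at hlim
  have hreal : Tendsto (fun n : ℕ =>
      (model (Fin n) ν (Measure.dirac r)).real (overloadedCutEvent n r β (t n)) * n)
      atTop (𝓝 0) := by
    refine squeeze_zero (fun n => by positivity) (fun n => ?_) hlim
    gcongr
    exact measureReal_overloadedCutEvent_le hr hβ hx n (t n)
  refine (ENNReal.ofReal_zero ▸ ENNReal.tendsto_ofReal hreal).congr fun n => ?_
  rw [ENNReal.ofReal_mul measureReal_nonneg, ofReal_measureReal, ENNReal.ofReal_natCast]
  rfl

end Asymptotics

instance isProbabilityMeasure_unif01 : IsProbabilityMeasure unif01 :=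
  ⟨by simp [unif01]⟩

/-- With probability `1 - o(n⁻¹)`, no cut of the order discretization
of `Γ_{[n]}(ψ)` (`ψ` degenerate at `r`) has more than `β·r·|S|·(n-|S|)` of its labels
among the first `α·n·log n`. -/
theorem statement17 (r : ℕ) (hr : 0 < r) (α β : ℝ) (hα : 0 < α) (hβ : 0 < β) :
    Tendsto (fun n : ℕ =>
        contModel (Fin n) (Measure.dirac r) {ω | ∃ S : Set (Fin n),
            S.Nonempty ∧ S ≠ Set.univ ∧
              β * r * S.ncard * ((n : ℝ) - S.ncard)
                < (cutCount ω S (α * n * Real.log n) : ℝ)}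
          * (n : ℝ≥0∞))
      atTop (𝓝 0) :=
  statement17_general unif01 r hr β hβ _ (isLittleO_mul_mul_log α)

end RTG
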